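/- Let ‖·‖ be a decomposable norm on ℝ^n all of whose unit-ball extreme points a ∈ G satisfy ‖a‖_u = 1. Suppose a ∈ G, y ∈ T_a^⊥ \ {0}, and z ∈ ℝ^n satisfies ‖z‖ ≤ 1 and ⟨y, z⟩ = ‖y‖*. Then z ∈ T_a^⊥. -/

import Mathlib

/-!
Let `G` be the set of extreme points of the unit ball. By Krein–Milman and Cauchy–Schwarz,
`⟪a, ·⟫ ≤ N` for every `a ∈ G`, so `a ∈ ∂N(a)`. Writing `a = e a + v` and using that `e a - v` is
also a subgradient gives `v = 0`; thus `e a = a`, and (`extPt_decomp`) `a + v ∈ ∂N(a)` if and only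
if `v ∈ (T a)ᗮ` and `‖v‖* ≤ 1`.

Scale `y` so that `‖y‖* = 1`, and suppose first that `z ∈ G` (`extPt_mem_perp`). Since `a ± y` have
dual norm at most one, `⟪a, z⟫ = 0`. Hence `y` and `a + y` both lie in `∂N(z)`, so their
difference `a` lies in `(T z)ᗮ`. Consequently `‖z + a‖* ≤ 1` and `⟪z + a, a⟫ = 1`, that is,
`a + z ∈ ∂N(a)`, which means `z ∈ (T a)ᗮ`.

In general `z` belongs to the face of the ball on which `⟪y, ·⟫` is maximal. Extreme points of this
compact convex face are in `G`, so Krein–Milman for the face and the fact that `(T a)ᗮ` is closed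
and convex reduce everything to the case `z ∈ G`.
-/

open Matrix

namespace PGH

variable {n m : ℕ}

/-- The inner product `⟪x, y⟫ = xᵀ B y` on `ℝⁿ` induced by a matrix `B`. -/
def ip (B : Matrix (Fin n) (Fin n) ℝ) (x y : Fin n → ℝ) : ℝ :=
  dotProduct x (B.mulVec y)

/-- The norm `‖x‖ᵤ = √(xᵀ B x)` induced by the inner product. -/
noncomputable def normu (B : Matrix (Fin n) (Fin n) ℝ) (x : Fin n → ℝ) : ℝ :=
  Real.sqrt (ip B x x)

/-- `N` is a norm on `ℝⁿ`. -/
structure IsNorm (N : (Fin n → ℝ) → ℝ) : Prop where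
  nonneg : ∀ x, 0 ≤ N x
  eq_zero_iff : ∀ x, N x = 0 ↔ x = 0
  triangle : ∀ x y, N (x + y) ≤ N x + N y
  smul_eq : ∀ (c : ℝ) (x), N (c • x) = |c| * N x

/-- The dual norm `‖y‖* = sup {⟪y, x⟫ : N x ≤ 1}`. -/
noncomputable def dualNorm (B : Matrix (Fin n) (Fin n) ℝ) (N : (Fin n → ℝ) → ℝ)
    (y : Fin n → ℝ) : ℝ :=
  sSup ((fun x => ip B y x) '' {x | N x ≤ 1})

/-- The subdifferential of `N` at `x` with respect to `⟪·,·⟫`. -/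
def subdiff (B : Matrix (Fin n) (Fin n) ℝ) (N : (Fin n → ℝ) → ℝ) (x : Fin n → ℝ) :
    Set (Fin n → ℝ) :=
  {z | ∀ y, N x + ip B z (y - x) ≤ N y}

/-- The set `G` of extreme points of the unit ball of `N`. -/
def extPts (N : (Fin n → ℝ) → ℝ) : Set (Fin n → ℝ) :=
  Set.extremePoints ℝ {x | N x ≤ 1}

/-- The orthogonal complement (w.r.t. `⟪·,·⟫`) of a subspace `T`, as a set. -/
def perp (B : Matrix (Fin n) (Fin n) ℝ) (T : Submodule ℝ (Fin n → ℝ)) :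
    Set (Fin n → ℝ) :=
  {v | ∀ u ∈ T, ip B u v = 0}

/-- A decomposability structure for the norm `N`: for every `x` there are a subspace `T x`
and a vector `e x ∈ T x` with `∂N(x) = {e x + v : v ∈ (T x)ᗮ, ‖v‖* ≤ 1}`. -/
structure DecompStruct (B : Matrix (Fin n) (Fin n) ℝ) (N : (Fin n → ℝ) → ℝ) where
  T : (Fin n → ℝ) → Submodule ℝ (Fin n → ℝ)
  e : (Fin n → ℝ) → (Fin n → ℝ)
  e_mem : ∀ x, e x ∈ T x
  subdiff_eq : ∀ x, subdiff B N x =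
    {ξ | ∃ v ∈ perp B (T x), dualNorm B N v ≤ 1 ∧ ξ = e x + v}

/-- `K x = ‖e x‖ᵤ²`. -/
noncomputable def Kfun (B : Matrix (Fin n) (Fin n) ℝ) (N : (Fin n → ℝ) → ℝ)
    (D : DecompStruct B N) (x : Fin n → ℝ) : ℝ :=
  (normu B (D.e x)) ^ 2

/-- Squared Euclidean norm `‖v‖₂²` on `ℝᵐ`. -/
def sq2 (v : Fin m → ℝ) : ℝ := dotProduct v v

/-- The least-squares loss `f(x) = ½ ‖A x - b‖₂²`. -/
noncomputable def fls (A : Matrix (Fin m) (Fin n) ℝ) (b : Fin m → ℝ) (x : Fin n → ℝ) : ℝ :=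
  (1 / 2) * sq2 (A.mulVec x - b)

/-- The adjoint `A* = B⁻¹ Aᵀ` of `A` w.r.t. `⟪·,·⟫`. -/
noncomputable def Astar (B : Matrix (Fin n) (Fin n) ℝ) (A : Matrix (Fin m) (Fin n) ℝ) :
    Matrix (Fin n) (Fin m) ℝ := B⁻¹ * Aᵀ

/-- The gradient `∇f(x) = A*(A x - b)` of the least-squares loss w.r.t. `⟪·,·⟫`. -/
noncomputable def gradf (B : Matrix (Fin n) (Fin n) ℝ) (A : Matrix (Fin m) (Fin n) ℝ)
    (b : Fin m → ℝ) (x : Fin n → ℝ) : Fin n → ℝ :=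
  (Astar B A).mulVec (A.mulVec x - b)

/-- `ρ` is a valid lower restricted isometry constant of `A` at level `k`. -/
def IsLowerRIP (B : Matrix (Fin n) (Fin n) ℝ) (N : (Fin n → ℝ) → ℝ)
    (A : Matrix (Fin m) (Fin n) ℝ) (k ρ : ℝ) : Prop :=
  0 < ρ ∧ ∀ x : Fin n → ℝ, (N x) ^ 2 ≤ k * (normu B x) ^ 2 →
    ρ * (normu B x) ^ 2 ≤ sq2 (A.mulVec x)

/-- `ρ` is a valid upper restricted isometry constant of `A` at level `k`. -/
def IsUpperRIP (B : Matrix (Fin n) (Fin n) ℝ) (N : (Fin n → ℝ) → ℝ)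
    (A : Matrix (Fin m) (Fin n) ℝ) (k ρ : ℝ) : Prop :=
  0 < ρ ∧ ∀ x : Fin n → ℝ, (N x) ^ 2 ≤ k * (normu B x) ^ 2 →
    sq2 (A.mulVec x) ≤ ρ * (normu B x) ^ 2

/-- The regularized objective `φ_λ(x) = f(x) + λ N(x)`. -/
noncomputable def phi (A : Matrix (Fin m) (Fin n) ℝ) (b : Fin m → ℝ)
    (N : (Fin n → ℝ) → ℝ) (lam : ℝ) (x : Fin n → ℝ) : ℝ :=
  fls A b x + lam * N x

/-- The proximal model `m_{λ,L}(y, x)`. -/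
noncomputable def mdl (B : Matrix (Fin n) (Fin n) ℝ) (A : Matrix (Fin m) (Fin n) ℝ)
    (b : Fin m → ℝ) (N : (Fin n → ℝ) → ℝ) (lam L : ℝ) (y x : Fin n → ℝ) : ℝ :=
  fls A b y + ip B (gradf B A b y) (x - y) + (L / 2) * (normu B (x - y)) ^ 2 + lam * N x

/-- `xp = Prox_{λ,L}(y)`, i.e. `xp` minimizes `m_{λ,L}(y, ·)`. -/
def IsProx (B : Matrix (Fin n) (Fin n) ℝ) (A : Matrix (Fin m) (Fin n) ℝ)
    (b : Fin m → ℝ) (N : (Fin n → ℝ) → ℝ) (lam L : ℝ) (y xp : Fin n → ℝ) : Prop :=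
  ∀ u, mdl B A b N lam L y xp ≤ mdl B A b N lam L y u

/-- `ω_λ(x) = min_{ξ ∈ ∂N(x)} ‖λ ξ + ∇f(x)‖*`. -/
noncomputable def omega (B : Matrix (Fin n) (Fin n) ℝ) (A : Matrix (Fin m) (Fin n) ℝ)
    (b : Fin m → ℝ) (N : (Fin n → ℝ) → ℝ) (lam : ℝ) (x : Fin n → ℝ) : ℝ :=
  sInf ((fun ξ => dualNorm B N (lam • ξ + gradf B A b x)) '' subdiff B N x)

/-- Assumption 1 of the paper, phrased for given valid restricted isometry constants
`ρlow = ρ₋(A, c k₀ (1+γ)²)`, `ρlow2 = ρ₋(A, 72 r c k₀ (1+γ) γinc)` and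
`ρup2 = ρ₊(A, 72 r c k₀ (1+γ) γinc)`. -/
def Assumption1 (B : Matrix (Fin n) (Fin n) ℝ) (N : (Fin n → ℝ) → ℝ)
    (A : Matrix (Fin m) (Fin n) ℝ) (z : Fin m → ℝ)
    (c k₀ γinc lamtgt r δ γ ρlow ρlow2 ρup2 : ℝ) : Prop :=
  dualNorm B N ((Astar B A).mulVec z) ≤ lamtgt / 4 ∧
  1 < r ∧ 0 < δ ∧ δ ≤ 1 / 4 ∧
  γ = (lamtgt * (1 + δ) + dualNorm B N ((Astar B A).mulVec z)) /
      (lamtgt * (1 - δ) - dualNorm B N ((Astar B A).mulVec z)) ∧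
  IsLowerRIP B N A (c * k₀ * (1 + γ) ^ 2) ρlow ∧
  IsLowerRIP B N A (72 * r * c * k₀ * (1 + γ) * γinc) ρlow2 ∧
  IsUpperRIP B N A (72 * r * c * k₀ * (1 + γ) * γinc) ρup2 ∧
  ρlow / ρup2 > c / r

/-- One backtracking step: `M` is the smallest element of `{Lt γinc^j : j ≥ 0}`
for which the proximal point is accepted, and `xt1` is that proximal point. -/
def BacktrackMin (B : Matrix (Fin n) (Fin n) ℝ) (A : Matrix (Fin m) (Fin n) ℝ)
    (b : Fin m → ℝ) (N : (Fin n → ℝ) → ℝ) (lam γinc Lt : ℝ)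
    (xt : Fin n → ℝ) (M : ℝ) (xt1 : Fin n → ℝ) : Prop :=
  (∃ j : ℕ, M = Lt * γinc ^ j) ∧
  IsProx B A b N lam M xt xt1 ∧
  phi A b N lam xt1 ≤ mdl B A b N lam M xt xt1 ∧
  ∀ j : ℕ, Lt * γinc ^ j < M →
    ∀ u, IsProx B A b N lam (Lt * γinc ^ j) xt u →
      ¬ phi A b N lam u ≤ mdl B A b N lam (Lt * γinc ^ j) xt u

/-- The iterates of the proximal-gradient subroutine with backtracking. -/
structure ProxGradSeq (B : Matrix (Fin n) (Fin n) ℝ) (A : Matrix (Fin m) (Fin n) ℝ)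
    (b : Fin m → ℝ) (N : (Fin n → ℝ) → ℝ) (lam γinc γdec Lmin : ℝ)
    (x : ℕ → Fin n → ℝ) (L M : ℕ → ℝ) : Prop where
  step : ∀ t, BacktrackMin B A b N lam γinc (L t) (x t) (M (t + 1)) (x (t + 1))
  Lupdate : ∀ t, L (t + 1) = max Lmin (M (t + 1) / γdec)

/-- The quantity `‖M (x⁻ - x) + ∇f(x) - ∇f(x⁻)‖*` used in the stopping criterion. -/
noncomputable def stopQ (B : Matrix (Fin n) (Fin n) ℝ) (A : Matrix (Fin m) (Fin n) ℝ)
    (b : Fin m → ℝ) (N : (Fin n → ℝ) → ℝ) (Mt : ℝ) (xprev xcur : Fin n → ℝ) : ℝ :=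
  dualNorm B N (Mt • (xprev - xcur) + (gradf B A b xcur - gradf B A b xprev))


section helpers

variable {B : Matrix (Fin n) (Fin n) ℝ} {N : (Fin n → ℝ) → ℝ}

/-! ### The bilinear form -/

lemma ip_add_left (x y z : Fin n → ℝ) : ip B (x + y) z = ip B x z + ip B y z := by
  simp [ip, add_dotProduct]

lemma ip_sub_left (x y z : Fin n → ℝ) : ip B (x - y) z = ip B x z - ip B y z := by
  simp [ip, sub_dotProduct]

lemma ip_neg_left (x z : Fin n → ℝ) : ip B (-x) z = -ip B x z := by
  simp [ip]

lemma ip_smul_left (c : ℝ) (x z : Fin n → ℝ) : ip B (c • x) z = c * ip B x z := by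
  simp [ip, smul_dotProduct]

lemma ip_add_right (x y z : Fin n → ℝ) : ip B x (y + z) = ip B x y + ip B x z := by
  simp [ip, mulVec_add, dotProduct_add]

lemma ip_sub_right (x y z : Fin n → ℝ) : ip B x (y - z) = ip B x y - ip B x z := by
  simp [ip, mulVec_sub, dotProduct_sub]

lemma ip_neg_right (x y : Fin n → ℝ) : ip B x (-y) = -ip B x y := by
  simp [ip, mulVec_neg]

lemma ip_smul_right (c : ℝ) (x y : Fin n → ℝ) : ip B x (c • y) = c * ip B x y := by
  simp [ip, mulVec_smul]

lemma ip_zero_right (x : Fin n → ℝ) : ip B x 0 = 0 := by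
  simp [ip]

lemma ip_comm (hB : B.PosDef) (x y : Fin n → ℝ) : ip B x y = ip B y x := by
  have h : Bᵀ = B := by simpa using hB.isHermitian.eq
  unfold ip
  conv_rhs => rw [← h, mulVec_transpose, dotProduct_comm, ← dotProduct_mulVec]

lemma ip_self_pos (hB : B.PosDef) {x : Fin n → ℝ} (hx : x ≠ 0) : 0 < ip B x x := by
  simpa [ip] using hB.dotProduct_mulVec_pos hx

lemma ip_self_nonneg (hB : B.PosDef) (x : Fin n → ℝ) : 0 ≤ ip B x x := by
  rcases eq_or_ne x 0 with rfl | hx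
  · simp [ip]
  · exact (ip_self_pos hB hx).le

lemma continuous_ip (x : Fin n → ℝ) : Continuous (fun y => ip B x y) := by
  unfold ip
  fun_prop

lemma isLinearMap_ip (x : Fin n → ℝ) : IsLinearMap ℝ (fun y => ip B x y) :=
  ⟨ip_add_right x, fun c y => ip_smul_right c x y⟩

/-! ### Norms on `ℝⁿ` and duality -/

lemma IsNorm.neg (hN : IsNorm N) (x : Fin n → ℝ) : N (-x) = N x := by
  have := hN.smul_eq (-1) x
  simpa using this

lemma IsNorm.zero (hN : IsNorm N) : N 0 = 0 := (hN.eq_zero_iff 0).2 rfl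

/-- All norms on `ℝⁿ` are equivalent, so the unit ball of `N` is compact in the product
topology. -/
lemma IsNorm.isCompact_ball (hN : IsNorm N) : IsCompact {x | N x ≤ 1} := by
  -- A second copy of the space carries `N` as its norm; the identity is then a linear map
  -- between finite-dimensional normed spaces, hence continuous.
  have key : ∀ (E : Type) [NormedAddCommGroup E] [NormedSpace ℝ E] [FiniteDimensional ℝ E]
      (f : E →ₗ[ℝ] (Fin n → ℝ)), IsCompact (f '' {x | ‖x‖ ≤ 1}) := by
    intro E _ _ _ f
    have := FiniteDimensional.proper_real E
    have hball : {x : E | ‖x‖ ≤ 1} = Metric.closedBall 0 1 := by ext x; simp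
    rw [hball]
    exact (isCompact_closedBall (0 : E) 1).image f.continuous_of_finiteDimensional
  let i0 : Norm (Fin n → ℝ) := ⟨N⟩
  let core : @NormedSpace.Core ℝ (Fin n → ℝ) _ _ _ i0 :=
    @NormedSpace.Core.mk ℝ (Fin n → ℝ) _ _ _ i0
      (@SeminormedSpace.Core.mk ℝ (Fin n → ℝ) _ _ i0 _ hN.nonneg hN.smul_eq hN.triangle)
      hN.eq_zero_iff
  let i1 : NormedAddCommGroup (Fin n → ℝ) :=
    @NormedAddCommGroup.ofCore ℝ (Fin n → ℝ) _ _ _ i0 core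
  let i2 : @NormedSpace ℝ (Fin n → ℝ) _ i1.toSeminormedAddCommGroup :=
    @NormedSpace.ofCore ℝ (Fin n → ℝ) _ i1.toSeminormedAddCommGroup _ core
  have h := @key (Fin n → ℝ) i1 i2 (inferInstanceAs (FiniteDimensional ℝ (Fin n → ℝ)))
    LinearMap.id
  rwa [LinearMap.id_coe, Set.image_id] at h

lemma IsNorm.convex_ball (hN : IsNorm N) : Convex ℝ {x | N x ≤ 1} := by
  intro x hx y hy s t hs ht hst
  have h1 := hN.triangle (s • x) (t • y)
  rw [hN.smul_eq, hN.smul_eq, abs_of_nonneg hs, abs_of_nonneg ht] at h1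
  simp only [Set.mem_ofPred_eq] at hx hy ⊢
  nlinarith

lemma bddAbove_ip_image (hN : IsNorm N) (y : Fin n → ℝ) :
    BddAbove ((fun x => ip B y x) '' {x | N x ≤ 1}) :=
  (hN.isCompact_ball.image (continuous_ip y)).bddAbove

/-- A linear form that is at most `c` on the unit ball is at most `c * N`. -/
lemma IsNorm.ip_le_of_ball (hN : IsNorm N) {y : Fin n → ℝ} {c : ℝ}
    (h : ∀ x, N x ≤ 1 → ip B y x ≤ c) (x : Fin n → ℝ) : ip B y x ≤ c * N x := by
  rcases eq_or_ne x 0 with rfl | hx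
  · simp [ip_zero_right, hN.zero]
  have hpos : 0 < N x := lt_of_le_of_ne (hN.nonneg x) fun h0 => hx ((hN.eq_zero_iff x).1 h0.symm)
  have h1 := h ((N x)⁻¹ • x) (by
    rw [hN.smul_eq, abs_of_pos (inv_pos.2 hpos), inv_mul_cancel₀ hpos.ne'])
  rwa [ip_smul_right, inv_mul_le_iff₀ hpos, mul_comm] at h1

lemma ip_le_dualNorm_mul (hN : IsNorm N) (y x : Fin n → ℝ) :
    ip B y x ≤ dualNorm B N y * N x :=
  hN.ip_le_of_ball (fun z hz => le_csSup (bddAbove_ip_image hN y) ⟨z, hz, rfl⟩) x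

lemma dualNorm_le_one_iff (hN : IsNorm N) {y : Fin n → ℝ} :
    dualNorm B N y ≤ 1 ↔ ∀ x, ip B y x ≤ N x := by
  constructor
  · intro h x
    nlinarith [ip_le_dualNorm_mul (B := B) hN y x, hN.nonneg x]
  · intro h
    refine csSup_le ⟨_, 0, by simp [hN.zero], rfl⟩ ?_
    rintro _ ⟨x, hx, rfl⟩
    exact (h x).trans hx

lemma dualNorm_pos (hB : B.PosDef) (hN : IsNorm N) {y : Fin n → ℝ} (hy : y ≠ 0) :
    0 < dualNorm B N y := by
  by_contra! h
  nlinarith [ip_le_dualNorm_mul (B := B) hN y y, hN.nonneg y, ip_self_pos hB hy]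

lemma mem_subdiff_iff (hN : IsNorm N) {a ξ : Fin n → ℝ} (ha : N a = 1) :
    ξ ∈ subdiff B N a ↔ (∀ x, ip B ξ x ≤ N x) ∧ ip B ξ a = 1 := by
  constructor
  · intro h
    have h0 := h 0
    have h2 := h (a + a)
    have h3 := hN.triangle a a
    rw [ip_sub_right, ip_zero_right, hN.zero] at h0
    rw [add_sub_cancel_right] at h2
    have h1 : ip B ξ a = 1 := by linarith
    refine ⟨fun x => ?_, h1⟩
    have hx := h x
    rw [ip_sub_right] at hx
    linarith
  · rintro ⟨h, h1⟩ x
    rw [ip_sub_right]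
    linarith [h x]

/-! ### Orthogonal complements -/

lemma perp_sub {T : Submodule ℝ (Fin n → ℝ)} {v w : Fin n → ℝ} (hv : v ∈ perp B T)
    (hw : w ∈ perp B T) : v - w ∈ perp B T := fun u hu => by
  rw [ip_sub_right, hv u hu, hw u hu, sub_zero]

lemma perp_smul {T : Submodule ℝ (Fin n → ℝ)} {v : Fin n → ℝ} (c : ℝ) (hv : v ∈ perp B T) :
    c • v ∈ perp B T := fun u hu => by
  rw [ip_smul_right, hv u hu, mul_zero]

lemma perp_neg {T : Submodule ℝ (Fin n → ℝ)} {v : Fin n → ℝ} (hv : v ∈ perp B T) :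
    -v ∈ perp B T := fun u hu => by
  rw [ip_neg_right, hv u hu, neg_zero]

lemma perp_eq_iInter (T : Submodule ℝ (Fin n → ℝ)) :
    perp B T = ⋂ u ∈ T, {v | ip B u v = 0} := by
  ext v
  simp [perp]

lemma isClosed_perp (T : Submodule ℝ (Fin n → ℝ)) : IsClosed (perp B T) := by
  rw [perp_eq_iInter]
  exact isClosed_biInter fun u _ => isClosed_eq (continuous_ip u) continuous_const

lemma convex_perp (T : Submodule ℝ (Fin n → ℝ)) : Convex ℝ (perp B T) := by
  rw [perp_eq_iInter]
  exact convex_iInter₂ fun u _ => convex_hyperplane (isLinearMap_ip u) 0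

/-! ### Extreme points of the unit ball -/

lemma ip_self_eq_one {a : Fin n → ℝ} (h : normu B a = 1) : ip B a a = 1 :=
  Real.sqrt_eq_one.1 h

/-- Extreme points have dual norm at most one: by Krein–Milman it suffices to bound `⟪a, g⟫`
for extreme `g`, where Cauchy–Schwarz applies. -/
lemma ip_extPt_le (hB : B.PosDef) (hN : IsNorm N) (hExt : ∀ a ∈ extPts N, normu B a = 1)
    {a : Fin n → ℝ} (ha : a ∈ extPts N) (x : Fin n → ℝ) : ip B a x ≤ N x := by
  have hball : ∀ x, N x ≤ 1 → ip B a x ≤ 1 := by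
    intro x hx
    have hmem : x ∈ closure (convexHull ℝ (extPts N)) := by
      rw [extPts, closure_convexHull_extremePoints hN.isCompact_ball hN.convex_ball]
      exact hx
    have hsub : closure (convexHull ℝ (extPts N)) ⊆ {x | ip B a x ≤ 1} := by
      refine closure_minimal (convexHull_min ?_ (convex_halfSpace_le (isLinearMap_ip a) 1))
        (isClosed_le (continuous_ip a) continuous_const)
      intro g hg
      have h := ip_self_nonneg hB (a - g)
      rw [ip_sub_left, ip_sub_right, ip_sub_right, ip_comm hB g a,
        ip_self_eq_one (hExt a ha), ip_self_eq_one (hExt g hg)] at h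
      simp only [Set.mem_ofPred_eq]
      linarith
    exact hsub hmem
  simpa using hN.ip_le_of_ball hball x

/-- At an extreme point `a` one has `N a = 1` and `e a = a`, so the decomposition of the
subdifferential reads `∂N(a) = {a + v : v ∈ (T a)ᗮ, ‖v‖* ≤ 1}`. -/
lemma extPt_decomp (hB : B.PosDef) (hN : IsNorm N) (hExt : ∀ a ∈ extPts N, normu B a = 1)
    (D : DecompStruct B N) {a : Fin n → ℝ} (ha : a ∈ extPts N) (v : Fin n → ℝ) :
    ((∀ x, ip B (a + v) x ≤ N x) ∧ ip B (a + v) a = 1) ↔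
      v ∈ perp B (D.T a) ∧ ∀ x, ip B v x ≤ N x := by
  have haa : ip B a a = 1 := ip_self_eq_one (hExt a ha)
  have hPa := ip_extPt_le hB hN hExt ha
  have hNa : N a = 1 := le_antisymm ha.1 (haa ▸ hPa a)
  have hdec : ∀ ξ, ((∀ x, ip B ξ x ≤ N x) ∧ ip B ξ a = 1) ↔
      ∃ v ∈ perp B (D.T a), (∀ x, ip B v x ≤ N x) ∧ ξ = D.e a + v := by
    intro ξ
    rw [← mem_subdiff_iff hN hNa, D.subdiff_eq]
    simp only [dualNorm_le_one_iff hN, Set.mem_ofPred_eq]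
  have he : D.e a = a := by
    obtain ⟨w, hw, hPw, haw⟩ := (hdec a).1 ⟨hPa, haa⟩
    have hPw' : ∀ x, ip B (-w) x ≤ N x := fun x => by
      rw [ip_neg_left, ← ip_neg_right, ← hN.neg x]
      exact hPw (-x)
    -- `a = e a + w` and `e a - w` are both subgradients at `a`, which forces `⟪w, w⟫ = 0`.
    have h1 := ((hdec (D.e a + -w)).2 ⟨-w, perp_neg hw, hPw', rfl⟩).2
    have h2 : ip B (D.e a + w) a = 1 := by rw [← haw]; exact haa
    rw [ip_add_left, ip_neg_left] at h1
    rw [ip_add_left] at h2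
    have h3 : ip B w (D.e a + w) = 0 := by rw [← haw]; linarith
    rw [ip_add_right, ip_comm hB, hw _ (D.e_mem a), zero_add] at h3
    have hw0 : w = 0 := by
      by_contra hne
      exact (ip_self_pos hB hne).ne' h3
    rw [hw0, add_zero] at haw
    exact haw.symm
  rw [hdec, he]
  constructor
  · rintro ⟨w, hw, hPw, h⟩
    rw [add_left_cancel h]
    exact ⟨hw, hPw⟩
  · rintro ⟨hv, hPv⟩
    exact ⟨v, hv, hPv, rfl⟩

/-- The result for an extreme point `z`, with `y` normalised. The relation `a ∈ (T z)ᗮ` is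
obtained first and then turned into `z ∈ (T a)ᗮ`. -/
lemma extPt_mem_perp (hB : B.PosDef) (hN : IsNorm N) (hExt : ∀ a ∈ extPts N, normu B a = 1)
    (D : DecompStruct B N) {a y z : Fin n → ℝ} (ha : a ∈ extPts N) (hz : z ∈ extPts N)
    (hy : y ∈ perp B (D.T a)) (hPy : ∀ x, ip B y x ≤ N x) (hyz : ip B y z = 1) :
    z ∈ perp B (D.T a) := by
  have hPy' : ∀ x, ip B (-y) x ≤ N x := fun x => by
    rw [ip_neg_left, ← ip_neg_right, ← hN.neg x]
    exact hPy (-x)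
  have hadd := ((extPt_decomp hB hN hExt D ha y).2 ⟨hy, hPy⟩).1
  have hsub := ((extPt_decomp hB hN hExt D ha (-y)).2 ⟨perp_neg hy, hPy'⟩).1
  have hNz : N z ≤ 1 := hz.1
  -- Testing `a + y` against `z` and `a - y` against `-z` gives the two inequalities.
  have haz : ip B a z = 0 := by
    have h1 := hadd z
    have h2 := hsub (-z)
    rw [hN.neg, ip_neg_right, ip_add_left, ip_neg_left] at h2
    rw [ip_add_left] at h1
    linarith
  -- Both `y` and `a + y` are subgradients at `z`, so their difference lies in `(T z)ᗮ`.
  have h1 := ((extPt_decomp hB hN hExt D hz (y - z)).1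
    (by rw [add_sub_cancel]; exact ⟨hPy, hyz⟩)).1
  have h2 := ((extPt_decomp hB hN hExt D hz (a + y - z)).1
    (by rw [add_sub_cancel]; exact ⟨hadd, by rw [ip_add_left, haz, hyz, zero_add]⟩)).1
  have h3 : a ∈ perp B (D.T z) := by
    have h := perp_sub h2 h1
    rwa [sub_sub_sub_cancel_right, add_sub_cancel_right] at h
  have h4 := ((extPt_decomp hB hN hExt D hz a).2 ⟨h3, ip_extPt_le hB hN hExt ha⟩).1
  refine ((extPt_decomp hB hN hExt D ha z).1 ⟨by rwa [add_comm], ?_⟩).1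
  rw [ip_add_left, ip_comm hB z a, haz, ip_self_eq_one (hExt a ha), add_zero]

end helpers

/-- **Lemma 5 / `interm`.** Let `a` be an extreme point of the unit ball of
a decomposable norm (with unit-norm extreme points), `y ∈ T_a^⊥ \ {0}`, and let `z` with
`‖z‖ ≤ 1` satisfy `⟪y, z⟫ = ‖y‖*`. Then `z ∈ T_a^⊥`. -/
theorem interm_extreme_point {n : ℕ}
    (B : Matrix (Fin n) (Fin n) ℝ) (hB : B.PosDef)
    (N : (Fin n → ℝ) → ℝ) (hN : IsNorm N)
    (hExt : ∀ a ∈ extPts N, normu B a = 1)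
    (D : DecompStruct B N)
    (a : Fin n → ℝ) (ha : a ∈ extPts N)
    (y : Fin n → ℝ) (hy : y ∈ perp B (D.T a)) (hy0 : y ≠ 0)
    (zz : Fin n → ℝ) (hz1 : N zz ≤ 1) (hz2 : ip B y zz = dualNorm B N y) :
    zz ∈ perp B (D.T a) := by
  set s := dualNorm B N y with hs
  have hspos : 0 < s := dualNorm_pos hB hN hy0
  have hle : ∀ x, ip B y x ≤ s * N x := ip_le_dualNorm_mul hN y
  have hPy : ∀ x, ip B (s⁻¹ • y) x ≤ N x := fun x => by
    rw [ip_smul_left, inv_mul_le_iff₀ hspos]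
    exact hle x
  -- The maximisers of `⟪y, ·⟫` form a compact face `F` of the unit ball.
  let F : Set (Fin n → ℝ) := {x | N x ≤ 1} ∩ {x | ip B y x = s}
  have hFcompact : IsCompact F :=
    hN.isCompact_ball.inter_right (isClosed_eq (continuous_ip y) continuous_const)
  have hFconvex : Convex ℝ F :=
    hN.convex_ball.inter (convex_hyperplane (isLinearMap_ip y) s)
  have hFext : IsExtreme ℝ {x | N x ≤ 1} F := by
    refine ⟨Set.inter_subset_left, ?_⟩
    rintro x hx w hw p ⟨-, hp⟩ ⟨α, β, hα, hβ, hαβ, rfl⟩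
    refine ⟨hx, ?_⟩
    simp only [Set.mem_ofPred_eq, ip_add_right, ip_smul_right] at hx hw hp ⊢
    have h1 : ip B y x ≤ s := by nlinarith [hle x]
    have h2 : ip B y w ≤ s := by nlinarith [hle w]
    refine le_antisymm h1 ?_
    obtain rfl : β = 1 - α := by linarith
    by_contra! h
    nlinarith [mul_lt_mul_of_pos_left h hα, mul_le_mul_of_nonneg_left h2 hβ.le]
  have hmem : zz ∈ closure (convexHull ℝ (F.extremePoints ℝ)) := by
    rw [closure_convexHull_extremePoints hFcompact hFconvex]
    exact ⟨hz1, hz2⟩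
  refine closure_minimal (convexHull_min ?_ (convex_perp _)) (isClosed_perp _) hmem
  intro g hg
  refine extPt_mem_perp hB hN hExt D ha (hFext.extremePoints_subset_extremePoints hg)
    (perp_smul s⁻¹ hy) hPy ?_
  have hgs : ip B y g = s := hg.1.2
  rw [ip_smul_left, hgs, inv_mul_cancel₀ hspos.ne']

end PGH
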